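/- Let μ ⪯ ν be probability measures on ℝ in convex order with supp(μ) ⊆ [0,∞), and let Γ ⊆ ℝ² be a minimising monotonicity set for the pair of cost functions c(x,y) := |x+y| and c'(x,y) := |x+y|y². Suppose (x,y⁺), (x,y⁻), (x',y') ∈ Γ with −x' < −x ≤ y⁻ < y⁺. Then it cannot be that y⁻ < y' < y⁺. -/

import Mathlib

open MeasureTheory

noncomputable section

/-- `μ` and `ν` are in convex order. -/
def InConvexOrder (μ ν : Measure ℝ) : Prop :=
  ∀ φ : ℝ → ℝ, ConvexOn ℝ Set.univ φ → Integrable φ μ → Integrable φ ν →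
    ∫ x, φ x ∂μ ≤ ∫ x, φ x ∂ν

/-- `α` has finite support contained in `Γ`. -/
def HasFiniteSupportIn (α : Measure (ℝ × ℝ)) (Γ : Set (ℝ × ℝ)) : Prop :=
  ∃ S : Finset (ℝ × ℝ), ↑S ⊆ Γ ∧ α ((↑S : Set (ℝ × ℝ))ᶜ) = 0

/-- `α'` is a competitor of `α`: a finitely supported measure with the same
marginals whose fiberwise barycenters agree with those of `α`. -/
def IsCompetitor (α α' : Measure (ℝ × ℝ)) : Prop :=
  (∃ S : Finset (ℝ × ℝ), α' ((↑S : Set (ℝ × ℝ))ᶜ) = 0) ∧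
  α'.map Prod.fst = α.map Prod.fst ∧
  α'.map Prod.snd = α.map Prod.snd ∧
  ∀ x : ℝ, ∫ p in {p : ℝ × ℝ | p.1 = x}, p.2 ∂α' =
    ∫ p in {p : ℝ × ℝ | p.1 = x}, p.2 ∂α

/-- `Γ` is a minimising monotonicity set for `(c, c')`: for every finitely
supported measure `α` with support in `Γ` and every competitor `α'` of `α`,
`∫ c dα ≤ ∫ c dα'`, and `∫ c dα = ∫ c dα'` implies `∫ c' dα ≥ ∫ c' dα'`. -/
def IsMinMonotonicitySet (c c' : ℝ → ℝ → ℝ) (Γ : Set (ℝ × ℝ)) : Prop :=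
  ∀ α : Measure (ℝ × ℝ), IsFiniteMeasure α → HasFiniteSupportIn α Γ →
    ∀ α' : Measure (ℝ × ℝ), IsCompetitor α α' →
      (∫ p : ℝ × ℝ, c p.1 p.2 ∂α ≤ ∫ p : ℝ × ℝ, c p.1 p.2 ∂α') ∧
      (∫ p : ℝ × ℝ, c p.1 p.2 ∂α = ∫ p : ℝ × ℝ, c p.1 p.2 ∂α' →
        ∫ p : ℝ × ℝ, c' p.1 p.2 ∂α' ≤ ∫ p : ℝ × ℝ, c' p.1 p.2 ∂α)

/-- `Γ` is a maximising monotonicity set for `(c, c')`: for every finitely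
supported measure `α` with support in `Γ` and every competitor `α'` of `α`,
`∫ c dα ≥ ∫ c dα'`, and `∫ c dα = ∫ c dα'` implies `∫ c' dα ≤ ∫ c' dα'`. -/
def IsMaxMonotonicitySet (c c' : ℝ → ℝ → ℝ) (Γ : Set (ℝ × ℝ)) : Prop :=
  ∀ α : Measure (ℝ × ℝ), IsFiniteMeasure α → HasFiniteSupportIn α Γ →
    ∀ α' : Measure (ℝ × ℝ), IsCompetitor α α' →
      (∫ p : ℝ × ℝ, c p.1 p.2 ∂α' ≤ ∫ p : ℝ × ℝ, c p.1 p.2 ∂α) ∧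
      (∫ p : ℝ × ℝ, c p.1 p.2 ∂α = ∫ p : ℝ × ℝ, c p.1 p.2 ∂α' →
        ∫ p : ℝ × ℝ, c' p.1 p.2 ∂α ≤ ∫ p : ℝ × ℝ, c' p.1 p.2 ∂α')

/-- Three-atom measure. -/
def threeAtoms (a b c : ℝ) (p q r : ℝ × ℝ) : Measure (ℝ × ℝ) :=
  ENNReal.ofReal a • Measure.dirac p + ENNReal.ofReal b • Measure.dirac q
    + ENNReal.ofReal c • Measure.dirac r

theorem threeAtoms_finite (a b c : ℝ) (p q r : ℝ × ℝ) :
    IsFiniteMeasure (threeAtoms a b c p q r) := by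
  constructor
  simp [threeAtoms]

theorem threeAtoms_integral {a b c : ℝ} (ha : 0 ≤ a) (hb : 0 ≤ b) (hc : 0 ≤ c)
    (p q r : ℝ × ℝ) (f : ℝ × ℝ → ℝ) :
    ∫ z, f z ∂(threeAtoms a b c p q r) = a * f p + b * f q + c * f r := by
  have key : ∀ (t : ℝ) (z : ℝ × ℝ), Integrable f (ENNReal.ofReal t • Measure.dirac z) :=
    fun t z => (integrable_dirac (by simp)).smul_measure ENNReal.ofReal_ne_top
  unfold threeAtoms
  rw [integral_add_measure ((key _ _).add_measure (key _ _)) (key _ _),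
    integral_add_measure (key _ _) (key _ _)]
  simp [integral_smul_measure, integral_dirac, ENNReal.toReal_ofReal, ha, hb, hc]

theorem threeAtoms_support (a b c : ℝ) (p q r : ℝ × ℝ) :
    threeAtoms a b c p q r ((↑({p, q, r} : Finset (ℝ × ℝ)) : Set (ℝ × ℝ))ᶜ) = 0 := by
  have hm : MeasurableSet ((↑({p, q, r} : Finset (ℝ × ℝ)) : Set (ℝ × ℝ))ᶜ) :=
    (Finset.measurableSet _).compl
  simp only [threeAtoms, Measure.add_apply, Measure.smul_apply, Measure.dirac_apply' _ hm]
  simp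

theorem threeAtoms_map (a b c : ℝ) (p q r : ℝ × ℝ) (f : ℝ × ℝ → ℝ) (hf : Measurable f) :
    (threeAtoms a b c p q r).map f = ENNReal.ofReal a • Measure.dirac (f p)
      + ENNReal.ofReal b • Measure.dirac (f q) + ENNReal.ofReal c • Measure.dirac (f r) := by
  unfold threeAtoms
  rw [Measure.map_add _ _ hf, Measure.map_add _ _ hf, Measure.map_smul, Measure.map_smul,
    Measure.map_smul, Measure.map_dirac' hf, Measure.map_dirac' hf, Measure.map_dirac' hf]

/-- Corollary 9 (minimising case): on the monotonicity set of a minimising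
(and secondarily maximising) martingale transport for `c(x,y) = |x+y|`,
`c'(x,y) = |x+y|·y²`, with `supp μ ⊆ [0,∞)`: if `(x,y⁺), (x,y⁻), (x',y') ∈ Γ`
with `-x' < -x ≤ y⁻ < y⁺`, then `y⁻ < y' < y⁺` is impossible. -/
theorem min_forbidden_interior
    (μ ν : Measure ℝ) [IsProbabilityMeasure μ] [IsProbabilityMeasure ν]
    (hconv : InConvexOrder μ ν)
    (hsupp : μ (Set.Iio 0) = 0)
    (Γ : Set (ℝ × ℝ))
    (hΓ : IsMinMonotonicitySet (fun x y => |x + y|) (fun x y => |x + y| * y ^ 2) Γ)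
    (x x' ym yp y' : ℝ)
    (hp : (x, yp) ∈ Γ) (hm : (x, ym) ∈ Γ) (h' : (x', y') ∈ Γ)
    (h1 : -x' < -x) (h2 : -x ≤ ym) (h3 : ym < yp) :
    ¬(ym < y' ∧ y' < yp) := by
  rintro ⟨h4, h5⟩
  have ha : 0 ≤ y' - ym := by linarith
  have hb : 0 ≤ yp - y' := by linarith
  have hc : 0 ≤ (y' - ym) + (yp - y') := by linarith
  have hxx : x < x' := by linarith
  have H := hΓ (threeAtoms (y' - ym) (yp - y') ((y' - ym) + (yp - y')) (x, yp) (x, ym) (x', y'))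
    (threeAtoms_finite _ _ _ _ _ _)
    ⟨{(x, yp), (x, ym), (x', y')}, by
      intro z hz
      simp only [Finset.coe_insert, Finset.coe_singleton, Set.mem_insert_iff,
        Set.mem_singleton_iff] at hz
      rcases hz with rfl | rfl | rfl <;> assumption, threeAtoms_support _ _ _ _ _ _⟩
    (threeAtoms (y' - ym) (yp - y') ((y' - ym) + (yp - y')) (x', yp) (x', ym) (x, y'))
    ⟨⟨_, threeAtoms_support _ _ _ _ _ _⟩, by
      rw [threeAtoms_map _ _ _ _ _ _ _ measurable_fst, threeAtoms_map _ _ _ _ _ _ _ measurable_fst]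
      simp only [ENNReal.ofReal_add ha hb, add_smul]
      abel, by
      rw [threeAtoms_map _ _ _ _ _ _ _ measurable_snd,
        threeAtoms_map _ _ _ _ _ _ _ measurable_snd], by
      intro u
      have hu : MeasurableSet {p : ℝ × ℝ | p.1 = u} :=
        measurable_fst (measurableSet_singleton u)
      rw [← integral_indicator hu, ← integral_indicator hu,
        threeAtoms_integral ha hb hc, threeAtoms_integral ha hb hc]
      simp only [Set.indicator, Set.mem_setOf_eq]
      split_ifs <;> first | ring | (exfalso; linarith)⟩
  simp only [threeAtoms_integral ha hb hc] at H
  have H2 := H.2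
  rw [abs_of_nonneg (show 0 ≤ x + yp by linarith), abs_of_nonneg (show 0 ≤ x + ym by linarith),
    abs_of_nonneg (show 0 ≤ x' + y' by linarith), abs_of_nonneg (show 0 ≤ x' + yp by linarith),
    abs_of_nonneg (show 0 ≤ x' + ym by linarith), abs_of_nonneg (show 0 ≤ x + y' by linarith)] at H2
  have H3 := H2 (by ring)
  have hpos : 0 < (x' - x) * ((y' - ym) * (yp - y') * (yp - ym)) := by
    have e1 : 0 < x' - x := by linarith
    have e2 : 0 < y' - ym := by linarith
    have e3 : 0 < yp - y' := by linarith
    have e4 : 0 < yp - ym := by linarith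
    positivity
  nlinarith [H3, hpos]
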